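/- Let μ : ℤ → ℂ be a sequence satisfying, for all n ∈ ℤ, both (μ_n − μ_{n+1})² = 2(μ_n + μ_{n+1}) and μ_{n+2} − 2μ_{n+1} + μ_n = 2. Then there exists a ∈ ℂ such that μ_n = (n+a)(n+a+1) for every n ∈ ℤ. -/

import Mathlib

theorem stmt5 (μ : ℤ → ℂ)
    (h1 : ∀ n : ℤ, (μ n - μ (n + 1)) ^ 2 = 2 * (μ n + μ (n + 1)))
    (h2 : ∀ n : ℤ, μ (n + 2) - 2 * μ (n + 1) + μ n = 2) :
    ∃ a : ℂ, ∀ n : ℤ, μ n = ((n : ℂ) + a) * ((n : ℂ) + a + 1) := by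
  obtain ⟨a, ha⟩ : ∃ a : ℂ, a = (μ 1 - μ 0) / 2 - 1 := ⟨_, rfl⟩
  have hm : μ 1 = μ 0 + 2 * (a + 1) := by rw [ha]; ring
  have h0 := h1 0
  rw [zero_add, hm] at h0
  refine ⟨a, ?_⟩
  have key : ∀ n : ℤ, μ n = ((n : ℂ) + a) * ((n : ℂ) + a + 1) ∧
      μ (n + 1) = ((n : ℂ) + a + 1) * ((n : ℂ) + a + 2) := by
    intro n
    induction n using Int.induction_on with
    | zero =>
      rw [zero_add, hm]
      push_cast
      constructor
      · linear_combination (-1 / 4 : ℂ) * h0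
      · linear_combination (-1 / 4 : ℂ) * h0
    | succ i ih =>
      obtain ⟨e1, e2⟩ := ih
      have h := h2 (i : ℤ)
      rw [show (i : ℤ) + 1 + 1 = i + 2 by ring]
      push_cast at *
      constructor
      · linear_combination e2
      · linear_combination h + 2 * e2 - e1
    | pred i ih =>
      obtain ⟨e1, e2⟩ := ih
      have h := h2 (-(i : ℤ) - 1)
      rw [show -(i : ℤ) - 1 + 2 = -i + 1 by ring, show -(i : ℤ) - 1 + 1 = -i by ring] at h
      rw [show -(i : ℤ) - 1 + 1 = -i by ring]
      push_cast at *
      constructor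
      · linear_combination h + 2 * e1 - e2
      · linear_combination e1
  exact fun n => (key n).1
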